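/- Let S be a finite set with at least three elements, ν a capacity on S with ν(S) = 1, and V the Choquet integral with respect to ν. Suppose V(y ∘ σ) = V(y) for every permutation σ of S and every nonnegative profile y : S → [0,∞) (the symmetry assumption), and suppose Δ_{ω₁,ω₂,ω₃}ν(A) ≥ 0 for every A ⊆ S and all distinct ω₁, ω₂, ω₃ ∈ S. Then V is ambiguity prudent. -/

import Mathlib

open MeasureTheory

/-- The Choquet integral of a nonnegative profile `y` with respect to a capacity `ν`:
`V(y) = ∫₀^∞ ν({ω : y ω ≥ t}) dt`. -/
noncomputable def choquet {Ω : Type*} [Fintype Ω] (ν : Finset Ω → ℝ) (y : Ω → ℝ) : ℝ :=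
  ∫ t in Set.Ioi (0 : ℝ), ν (Finset.univ.filter fun ω => t ≤ y ω)

/-- Ambiguity aversion for a functional on nonnegative profiles over a finite state space. -/
def AmbiguityAverseC {Ω : Type*} [DecidableEq Ω] (V : (Ω → ℝ) → ℝ) : Prop :=
  ∀ (E : Finset Ω) (ω₁ ω₂ : Ω) (u₁ u₂ ub : ℝ) (y : Ω → ℝ),
    ω₁ ∉ E → ω₂ ∉ E → ω₁ ≠ ω₂ →
    u₁ < u₂ → 0 < ub → 2 * ub < u₂ - u₁ → 0 ≤ u₁ - ub →
    (∀ ω, 0 ≤ y ω) →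
    y ω₁ = u₁ → y ω₂ = u₂ →
    (∀ ω ∈ E, y ω < u₁ - ub) →
    (∀ ω, ω ∉ E → ω ≠ ω₁ → ω ≠ ω₂ → u₂ + ub < y ω) →
    V (Function.update (Function.update y ω₁ (u₁ + ub)) ω₂ (u₂ - ub)) ≥
      V (Function.update (Function.update y ω₁ (u₁ - ub)) ω₂ (u₂ + ub))

/-- Ambiguity prudence for a functional on nonnegative profiles over a finite state space. -/
def AmbiguityPrudentC {Ω : Type*} [DecidableEq Ω] (V : (Ω → ℝ) → ℝ) : Prop :=
  ∀ (E : Finset Ω) (ω₁ ω₂ ω₃ : Ω) (u₁ u₂ u₃ ub : ℝ) (y : Ω → ℝ),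
    ω₁ ∉ E → ω₂ ∉ E → ω₃ ∉ E →
    ω₁ ≠ ω₂ → ω₁ ≠ ω₃ → ω₂ ≠ ω₃ →
    u₁ < u₂ → u₂ < u₃ → u₂ - u₁ = u₃ - u₂ →
    0 < ub → 3 * ub < u₂ - u₁ → 0 ≤ u₁ - ub →
    (∀ ω, 0 ≤ y ω) →
    y ω₁ = u₁ → y ω₂ = u₂ → y ω₃ = u₃ →
    (∀ ω ∈ E, y ω < u₁ - ub) →
    (∀ ω, ω ∉ E → ω ≠ ω₁ → ω ≠ ω₂ → ω ≠ ω₃ → u₃ + ub < y ω) →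
    V (Function.update (Function.update (Function.update y ω₁ (u₁ + ub)) ω₂ (u₂ - 2 * ub)) ω₃ (u₃ + ub)) ≥
      V (Function.update (Function.update (Function.update y ω₁ (u₁ - ub)) ω₂ (u₂ + 2 * ub)) ω₃ (u₃ - ub))

/-- Second derivative of a set function. -/
def secondDeriv {Ω : Type*} [DecidableEq Ω] (ν : Finset Ω → ℝ) (ω₁ ω₂ : Ω) (A : Finset Ω) : ℝ :=
  ν (A ∪ {ω₁, ω₂}) - ν ((A ∪ {ω₁}) \ {ω₂}) - ν ((A ∪ {ω₂}) \ {ω₁}) + ν (A \ {ω₁, ω₂})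

/-- Third derivative of a set function. -/
def thirdDeriv {Ω : Type*} [DecidableEq Ω] (ν : Finset Ω → ℝ) (ω₁ ω₂ ω₃ : Ω) (A : Finset Ω) : ℝ :=
  ∑ C ∈ ({ω₁, ω₂, ω₃} : Finset Ω).powerset,
    (-1 : ℝ) ^ (3 - C.card) * ν ((A \ {ω₁, ω₂, ω₃}) ∪ C)

lemma choquet_ind {Ω : Type*} [Fintype Ω] [DecidableEq Ω]
    (ν : Finset Ω → ℝ) (hν0 : ν ∅ = 0) (A : Finset Ω) :
    choquet ν (fun ω => if ω ∈ A then 1 else 0) = ν A := by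
  unfold choquet
  have h : Set.EqOn (fun t : ℝ => ν (Finset.univ.filter fun ω => t ≤ (if ω ∈ A then (1:ℝ) else 0)))
      ((Set.Ioc (0:ℝ) 1).indicator (fun _ => ν A)) (Set.Ioi 0) := by
    intro t ht
    have ht' : 0 < t := ht
    by_cases h1 : t ≤ 1
    · have : (Finset.univ.filter fun ω => t ≤ (if ω ∈ A then (1:ℝ) else 0)) = A := by
        ext ω
        by_cases hω : ω ∈ A <;> simp [hω, h1, ht']
      simp [this, ht', h1]
    · have : (Finset.univ.filter fun ω => t ≤ (if ω ∈ A then (1:ℝ) else 0)) = ∅ := by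
        ext ω
        by_cases hω : ω ∈ A <;> simp [hω] <;> linarith
      simp [this, h1, hν0]
  rw [setIntegral_congr_fun measurableSet_Ioi h, setIntegral_indicator measurableSet_Ioc]
  rw [Set.inter_eq_right.2 (show Set.Ioc (0:ℝ) 1 ⊆ Set.Ioi 0 from fun x hx => hx.1)]
  simp

lemma choquet_integrable {Ω : Type*} [Fintype Ω] [DecidableEq Ω]
    (ν : Finset Ω → ℝ) (hν0 : ν ∅ = 0)
    (hmono : ∀ A B : Finset Ω, A ⊆ B → ν A ≤ ν B) (y : Ω → ℝ) :
    IntegrableOn (fun t : ℝ => ν (Finset.univ.filter fun ω => t ≤ y ω)) (Set.Ioi 0) := by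
  obtain ⟨M, hM⟩ : ∃ M, ∀ ω, y ω ≤ M := by
    obtain ⟨M, hM⟩ := (Set.finite_range y).bddAbove
    exact ⟨M, fun ω => hM ⟨ω, rfl⟩⟩
  have hanti : Antitone (fun t : ℝ => ν (Finset.univ.filter fun ω => t ≤ y ω)) := by
    intro a b hab
    apply hmono
    intro ω
    simp only [Finset.mem_filter, Finset.mem_univ, true_and]
    exact fun h => hab.trans h
  have h1 : IntegrableOn (fun t : ℝ => ν (Finset.univ.filter fun ω => t ≤ y ω)) (Set.Icc 0 M) :=
    (hanti.antitoneOn _).integrableOn_isCompact isCompact_Icc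
  refine h1.of_forall_sdiff_eq_zero measurableSet_Ioi ?_
  intro t ht
  have ht0 : 0 < t := ht.1
  have htM : M < t := by
    by_contra hc
    exact ht.2 ⟨ht0.le, not_lt.1 hc⟩
  have : (Finset.univ.filter fun ω => t ≤ y ω) = ∅ := by
    ext ω
    simpa using (hM ω).trans_lt htM
  simp [this, hν0]

lemma ind_integral (a b c : ℝ) (ha : 0 ≤ a) (hab : a ≤ b) :
    IntegrableOn ((Set.Ioc a b).indicator (fun _ => c)) (Set.Ioi 0) ∧
    ∫ t in Set.Ioi (0:ℝ), (Set.Ioc a b).indicator (fun _ => c) t = (b - a) * c := by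
  constructor
  · apply Integrable.integrableOn
    rw [integrable_indicator_iff measurableSet_Ioc]
    simp
  · rw [setIntegral_indicator measurableSet_Ioc,
      Set.inter_eq_right.2 (show Set.Ioc a b ⊆ Set.Ioi 0 from fun x hx => lt_of_le_of_lt ha hx.1)]
    simp [hab]

lemma nu_perm {Ω : Type*} [Fintype Ω] [DecidableEq Ω]
    (ν : Finset Ω → ℝ) (hν0 : ν ∅ = 0)
    (hsym : ∀ (σ : Equiv.Perm Ω) (y : Ω → ℝ), (∀ ω, 0 ≤ y ω) →
      choquet ν (fun ω => y (σ ω)) = choquet ν y)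
    (A B : Finset Ω) (σ : Equiv.Perm Ω) (h : ∀ ω, σ ω ∈ A ↔ ω ∈ B) : ν B = ν A := by
  have := hsym σ (fun ω => if ω ∈ A then 1 else 0) (fun ω => by positivity)
  rw [choquet_ind ν hν0] at this
  simp only [h] at this
  rwa [choquet_ind ν hν0] at this

lemma nu_swap {Ω : Type*} [Fintype Ω] [DecidableEq Ω]
    (ν : Finset Ω → ℝ) (hν0 : ν ∅ = 0)
    (hsym : ∀ (σ : Equiv.Perm Ω) (y : Ω → ℝ), (∀ ω, 0 ≤ y ω) →
      choquet ν (fun ω => y (σ ω)) = choquet ν y)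
    (G : Finset Ω) (a b : Ω) (ha : a ∉ G) (hb : b ∉ G) :
    ν (G ∪ {a}) = ν (G ∪ {b}) := by
  apply nu_perm ν hν0 hsym _ _ (Equiv.swap a b)
  intro ω
  rw [Equiv.swap_apply_def]
  grind

lemma third_eq {Ω : Type*} [Fintype Ω] [DecidableEq Ω]
    (ν : Finset Ω → ℝ) (F : Finset Ω) (a b c : Ω) (hab : a ≠ b) (hac : a ≠ c) (hbc : b ≠ c)
    (ha : a ∉ F) (hb : b ∉ F) (hc : c ∉ F) :
    thirdDeriv ν a b c F = ν (F ∪ {a, b, c}) - ν (F ∪ {a, b}) - ν (F ∪ {a, c}) - ν (F ∪ {b, c})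
      + ν (F ∪ {a}) + ν (F ∪ {b}) + ν (F ∪ {c}) - ν F := by
  have hF : F \ {a, b, c} = F := by
    ext ω; grind
  unfold thirdDeriv
  rw [hF, Finset.sum_powerset_insert (by simp [hab, hac]),
    Finset.sum_powerset_insert (by simp [hbc])]
  rw [Finset.sum_powerset_insert (by simp [hbc])]
  have e : ({c} : Finset Ω).powerset = {∅, {c}} := by
    ext x; simp [Finset.subset_singleton_iff]
  have hne : (∅ : Finset Ω) ≠ {c} := (Finset.singleton_ne_empty c).symm
  simp only [e, Finset.sum_pair hne]
  have e1 : ({b, c} : Finset Ω).card = 2 := Finset.card_pair hbc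
  have e2 : ({a, c} : Finset Ω).card = 2 := Finset.card_pair hac
  have e3 : ({a, b} : Finset Ω).card = 2 := Finset.card_pair hab
  have e4 : ({a, b, c} : Finset Ω).card = 3 := by
    rw [Finset.card_insert_of_notMem (by simp [hab, hac]), e1]
  simp [e1, e2, e3, e4]
  ring

/-- If the Choquet integral of a capacity ν (with ν(S)=1) is symmetric under
permutations of the states (on nonnegative profiles) and the third derivative of ν is
nonnegative, then the Choquet integral is ambiguity prudent. -/
theorem CEU_thirdDeriv_nonneg_implies_ambiguityPrudent
    {Ω : Type*} [Fintype Ω] [DecidableEq Ω]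
    (hcard : 3 ≤ Fintype.card Ω)
    (ν : Finset Ω → ℝ) (hν0 : ν ∅ = 0) (hν1 : ν Finset.univ = 1)
    (hmono : ∀ A B : Finset Ω, A ⊆ B → ν A ≤ ν B)
    (hsym : ∀ (σ : Equiv.Perm Ω) (y : Ω → ℝ), (∀ ω, 0 ≤ y ω) →
      choquet ν (fun ω => y (σ ω)) = choquet ν y)
    (hd3 : ∀ (A : Finset Ω) (ω₁ ω₂ ω₃ : Ω), ω₁ ≠ ω₂ → ω₁ ≠ ω₃ → ω₂ ≠ ω₃ →
      0 ≤ thirdDeriv ν ω₁ ω₂ ω₃ A) :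
    AmbiguityPrudentC (choquet ν) := by
  intro E ω₁ ω₂ ω₃ u₁ u₂ u₃ ub y h1E h2E h3E h12 h13 h23 hu12 hu23 hu hub hub3 hu0 hy0 hy1 hy2 hy3 hE hF
  obtain ⟨F, hFdef⟩ : ∃ F : Finset Ω, ∀ ω, ω ∈ F ↔ (ω ∉ E ∧ ω ≠ ω₁ ∧ ω ≠ ω₂ ∧ ω ≠ ω₃) :=
    ⟨Finset.univ.filter fun ω => (ω ∉ E ∧ ω ≠ ω₁ ∧ ω ≠ ω₂ ∧ ω ≠ ω₃), by simp⟩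
  have h1F : ω₁ ∉ F := by simp [hFdef]
  have h2F : ω₂ ∉ F := by simp [hFdef]
  have h3F : ω₃ ∉ F := by simp [hFdef]
  have hd := hd3 F ω₁ ω₂ ω₃ h12 h13 h23
  rw [third_eq ν F ω₁ ω₂ ω₃ h12 h13 h23 h1F h2F h3F] at hd
  have s1 := nu_swap ν hν0 hsym F ω₁ ω₃ h1F h3F
  have s2 := nu_swap ν hν0 hsym F ω₂ ω₃ h2F h3F
  have s3 : ν (F ∪ {ω₁, ω₂}) = ν (F ∪ {ω₂, ω₃}) := by
    have := nu_swap ν hν0 hsym (F ∪ {ω₂}) ω₁ ω₃ (by grind) (by grind)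
    convert this using 2 <;> grind
  have s4 : ν (F ∪ {ω₁, ω₃}) = ν (F ∪ {ω₂, ω₃}) := by
    have := nu_swap ν hν0 hsym (F ∪ {ω₃}) ω₁ ω₂ (by grind) (by grind)
    convert this using 2 <;> grind
  set yB := Function.update (Function.update (Function.update y ω₁ (u₁ + ub)) ω₂ (u₂ - 2 * ub)) ω₃ (u₃ + ub) with hyB
  set yA := Function.update (Function.update (Function.update y ω₁ (u₁ - ub)) ω₂ (u₂ + 2 * ub)) ω₃ (u₃ - ub) with hyA
  have B1 : yB ω₁ = u₁ + ub := by simp [hyB, h12, h13]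
  have B2 : yB ω₂ = u₂ - 2 * ub := by simp [hyB, h23]
  have B3 : yB ω₃ = u₃ + ub := by simp [hyB]
  have B4 : ∀ ω, ω ≠ ω₁ → ω ≠ ω₂ → ω ≠ ω₃ → yB ω = y ω := by
    intro ω a b c; simp [hyB, a, b, c]
  have A1 : yA ω₁ = u₁ - ub := by simp [hyA, h12, h13]
  have A2 : yA ω₂ = u₂ + 2 * ub := by simp [hyA, h23]
  have A3 : yA ω₃ = u₃ - ub := by simp [hyA]
  have A4 : ∀ ω, ω ≠ ω₁ → ω ≠ ω₂ → ω ≠ ω₃ → yA ω = y ω := by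
    intro ω a b c; simp [hyA, a, b, c]
  clear_value yA yB
  have key : ∀ (t : ℝ) (z : Ω → ℝ) (G : Finset Ω), u₁ - ub < t → t ≤ u₃ + ub →
      (∀ ω, ω ≠ ω₁ → ω ≠ ω₂ → ω ≠ ω₃ → z ω = y ω) →
      G ⊆ {ω₁, ω₂, ω₃} →
      (t ≤ z ω₁ ↔ ω₁ ∈ G) → (t ≤ z ω₂ ↔ ω₂ ∈ G) → (t ≤ z ω₃ ↔ ω₃ ∈ G) →
      (Finset.univ.filter fun ω => t ≤ z ω) = F ∪ G := by
    intro t z G ht1 ht2 hz hG g1 g2 g3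
    ext ω
    simp only [Finset.mem_filter, Finset.mem_univ, true_and, Finset.mem_union]
    by_cases c1 : ω = ω₁
    · subst c1; simp [g1, h1F]
    by_cases c2 : ω = ω₂
    · subst c2; simp [g2, h2F]
    by_cases c3 : ω = ω₃
    · subst c3; simp [g3, h3F]
    have hnG : ω ∉ G := fun h => by simpa [c1, c2, c3] using hG h
    rw [hz ω c1 c2 c3]
    by_cases c4 : ω ∈ E
    · have := hE ω c4
      have hn : ¬ t ≤ y ω := by linarith
      simp [hn, hFdef, c4, hnG]
    · have := hF ω c4 c1 c2 c3
      have hn : t ≤ y ω := by linarith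
      simp [hn, hFdef, c4, c1, c2, c3]
  have hpt : ∀ t : ℝ, ν (Finset.univ.filter fun ω => t ≤ yB ω) - ν (Finset.univ.filter fun ω => t ≤ yA ω)
      = (Set.Ioc (u₁ - ub) (u₁ + ub)).indicator (fun _ => ν (F ∪ {ω₁, ω₂, ω₃}) - ν (F ∪ {ω₂, ω₃})) t
      + (Set.Ioc (u₂ - 2 * ub) (u₂ + 2 * ub)).indicator (fun _ => ν (F ∪ {ω₃}) - ν (F ∪ {ω₂, ω₃})) t
      + (Set.Ioc (u₃ - ub) (u₃ + ub)).indicator (fun _ => ν (F ∪ {ω₃}) - ν F) t := by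
    intro t
    by_cases i1 : t ∈ Set.Ioc (u₁ - ub) (u₁ + ub)
    · have i2 : t ∉ Set.Ioc (u₂ - 2 * ub) (u₂ + 2 * ub) := fun h => by linarith [h.1, i1.2]
      have i3 : t ∉ Set.Ioc (u₃ - ub) (u₃ + ub) := fun h => by linarith [h.1, i1.2]
      obtain ⟨l, r⟩ := i1
      rw [key t yB {ω₁, ω₂, ω₃} (by linarith) (by linarith) B4 (by grind)
          (by simp; linarith) (by simp; linarith) (by simp; linarith),
        key t yA {ω₂, ω₃} (by linarith) (by linarith) A4 (by grind)
          (by simp [h12, h13]; linarith) (by simp; linarith) (by simp; linarith)]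
      simp only [Set.indicator_of_notMem i2, Set.indicator_of_notMem i3,
        Set.indicator_of_mem (show t ∈ Set.Ioc (u₁ - ub) (u₁ + ub) from ⟨l, r⟩)]
      ring
    by_cases i2 : t ∈ Set.Ioc (u₂ - 2 * ub) (u₂ + 2 * ub)
    · have i3 : t ∉ Set.Ioc (u₃ - ub) (u₃ + ub) := fun h => by linarith [h.1, i2.2]
      obtain ⟨l, r⟩ := i2
      rw [key t yB {ω₃} (by linarith) (by linarith) B4 (by grind)
          (by simp [h13]; linarith) (by simp [h23]; linarith) (by simp; linarith),
        key t yA {ω₂, ω₃} (by linarith) (by linarith) A4 (by grind)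
          (by simp [h12, h13]; linarith) (by simp; linarith) (by simp; linarith)]
      simp only [Set.indicator_of_notMem i1, Set.indicator_of_notMem i3,
        Set.indicator_of_mem (show t ∈ Set.Ioc (u₂ - 2 * ub) (u₂ + 2 * ub) from ⟨l, r⟩)]
      ring
    by_cases i3 : t ∈ Set.Ioc (u₃ - ub) (u₃ + ub)
    · obtain ⟨l, r⟩ := i3
      rw [key t yB {ω₃} (by linarith) (by linarith) B4 (by grind)
          (by simp [h13]; linarith) (by simp [h23]; linarith) (by simp; linarith),
        key t yA ∅ (by linarith) (by linarith) A4 (by grind)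
          (by simp; linarith) (by simp; linarith) (by simp; linarith)]
      simp only [Set.indicator_of_notMem i1, Set.indicator_of_notMem i2,
        Set.indicator_of_mem (show t ∈ Set.Ioc (u₃ - ub) (u₃ + ub) from ⟨l, r⟩), Finset.union_empty]
      ring
    simp only [Set.indicator_of_notMem i1, Set.indicator_of_notMem i2, Set.indicator_of_notMem i3]
    have : (Finset.univ.filter fun ω => t ≤ yB ω) = (Finset.univ.filter fun ω => t ≤ yA ω) := by
      simp only [Set.mem_Ioc, not_and_or, not_lt, not_le] at i1 i2 i3
      ext ω
      simp only [Finset.mem_filter, Finset.mem_univ, true_and]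
      by_cases c1 : ω = ω₁
      · subst c1
        rw [B1, A1]
        constructor <;> intro h <;> rcases i1 with i1 | i1 <;> linarith
      by_cases c2 : ω = ω₂
      · subst c2
        rw [B2, A2]
        constructor <;> intro h <;> rcases i2 with i2 | i2 <;> linarith
      by_cases c3 : ω = ω₃
      · subst c3
        rw [B3, A3]
        constructor <;> intro h <;> rcases i3 with i3 | i3 <;> linarith
      rw [A4 ω c1 c2 c3, B4 ω c1 c2 c3]
    rw [this]
    ring
  obtain ⟨I1, J1⟩ := ind_integral (u₁ - ub) (u₁ + ub) (ν (F ∪ {ω₁, ω₂, ω₃}) - ν (F ∪ {ω₂, ω₃}))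
    (by linarith) (by linarith)
  obtain ⟨I2, J2⟩ := ind_integral (u₂ - 2 * ub) (u₂ + 2 * ub) (ν (F ∪ {ω₃}) - ν (F ∪ {ω₂, ω₃}))
    (by linarith) (by linarith)
  obtain ⟨I3, J3⟩ := ind_integral (u₃ - ub) (u₃ + ub) (ν (F ∪ {ω₃}) - ν F)
    (by linarith) (by linarith)
  have hdiff : choquet ν yB - choquet ν yA = 2 * ub *
      (ν (F ∪ {ω₁, ω₂, ω₃}) - 3 * ν (F ∪ {ω₂, ω₃}) + 3 * ν (F ∪ {ω₃}) - ν F) := by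
    unfold choquet
    rw [← integral_sub (choquet_integrable ν hν0 hmono yB) (choquet_integrable ν hν0 hmono yA)]
    simp only [hpt]
    rw [integral_add (by exact I1.add I2) I3, integral_add I1 I2, J1, J2, J3]
    ring
  have hfin : 0 ≤ choquet ν yB - choquet ν yA := by
    rw [hdiff]
    apply mul_nonneg (by linarith)
    linarith
  linarith
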